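/- For n ≥ 2, ∑_{n=2}^N [ n^{-s} - ∫_{n-1}^n x^{-s} dx ] = ∑_{m=1}^∞ ( ∏_{j=1}^m (1-s-j) ) · ((-1)^{m+1}/(m+1)!) · ∑_{n=2}^N n^{-s-m} for any complex s and integer N ≥ 2, where the inner series converges absolutely. -/

import Mathlib

open Finset Complex

lemma aux_desc (a : ℂ) (m : ℕ) :
    (descPochhammer ℤ (m + 1)).smeval a = a * ∏ j ∈ Icc 1 m, (a - (j : ℂ)) := by
  induction m with
  | zero => simp
  | succ m ih =>
    rw [descPochhammer_succ_right, Polynomial.smeval_mul, ih, Finset.prod_Icc_succ_top (by omega)]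
    simp [Polynomial.smeval_sub, Polynomial.smeval_natCast]
    ring

lemma aux_choose (a : ℂ) (m : ℕ) :
    Ring.choose a (m + 1) = a * (∏ j ∈ Icc 1 m, (a - (j : ℂ))) / ((m + 1).factorial : ℂ) := by
  rw [Ring.choose_eq_smul, aux_desc, smul_eq_mul, div_eq_inv_mul]

lemma aux_binom (a z : ℂ) (hz : ‖z‖ < 1) :
    HasSum (fun k : ℕ => Ring.choose a k * z ^ k) ((1 + z) ^ a) := by
  have h := (one_add_cpow_hasFPowerSeriesOnBall_zero (a := a)).hasSum (y := z)
    (by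
      rw [← ENNReal.ofReal_one, Metric.eball_ofReal]
      simpa using hz)
  simpa [binomialSeries, FormalMultilinearSeries.coeff_ofScalars, mul_comm] using h

lemma aux_prod_neg (m : ℕ) :
    ∏ j ∈ Icc 1 m, (1 - (1 : ℂ) - (j : ℂ)) = (-1) ^ m * (m.factorial : ℂ) := by
  induction m with
  | zero => simp
  | succ m ih =>
    rw [Finset.prod_Icc_succ_top (by omega), ih, Nat.factorial_succ]
    push_cast
    ring

lemma aux_term (s : ℂ) (n : ℕ) (hn : 2 ≤ n) :
    HasSum
      (fun m : ℕ =>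
        (∏ j ∈ Icc 1 (m + 1), (1 - s - (j : ℂ))) *
          ((-1) ^ (m + 1 + 1) / ((m + 1 + 1).factorial : ℂ)) * (n : ℂ) ^ (-s - (m + 1)))
      ((n : ℂ) ^ (-s) - ∫ x in ((n : ℝ) - 1)..(n : ℝ), (x : ℂ) ^ (-s)) := by
  have hnR : (2 : ℝ) ≤ n := by exact_mod_cast hn
  have hn0 : (n : ℂ) ≠ 0 := by
    have : n ≠ 0 := by omega
    exact_mod_cast this
  have hlt : ‖((n : ℂ))⁻¹‖ < 1 := by
    rw [norm_inv, norm_natCast]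
    exact inv_lt_one_of_one_lt₀ (by linarith)
  have hmem : (0 : ℝ) ∉ Set.uIcc ((n : ℝ) - 1) n :=
    Set.notMem_uIcc_of_lt (by linarith) (by linarith)
  have hpow : ∀ m : ℕ, (n : ℂ) ^ (-s - ((m : ℂ) + 1)) = (n : ℂ) ^ (-s) * ((n : ℂ)⁻¹) ^ (m + 1) := by
    intro m
    have : ((m : ℂ) + 1) = ((m + 1 : ℕ) : ℂ) := by push_cast; ring
    rw [this, cpow_sub _ _ hn0, cpow_natCast, inv_pow, div_eq_mul_inv]
  by_cases hs : s = 1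
  · subst hs
    have hint : ∫ x in ((n : ℝ) - 1)..(n : ℝ), (x : ℂ) ^ (-(1 : ℂ)) = - log (1 - (n : ℂ)⁻¹) := by
      have h1 : ∀ x : ℝ, (x : ℂ) ^ (-(1 : ℂ)) = ((x⁻¹ : ℝ) : ℂ) := by
        intro x
        rw [cpow_neg_one]; push_cast; rfl
      simp_rw [h1]
      rw [intervalIntegral.integral_ofReal, integral_inv hmem]
      have h2 : (1 - (n : ℂ)⁻¹) = (((((n : ℝ) / ((n : ℝ) - 1)))⁻¹ : ℝ) : ℂ) := by
        have : (n : ℝ) ≠ 0 := by linarith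
        rw [inv_div, sub_div, div_self this]
        push_cast
        ring
      rw [h2, ← ofReal_log (inv_nonneg.mpr (div_nonneg (by linarith) (by linarith))), Real.log_inv]
      push_cast
      ring
    have h := hasSum_taylorSeries_neg_log' hlt
    rw [← hasSum_nat_add_iff' 1] at h
    rw [hint]
    convert! h.neg using 1
    · funext m
      rw [hpow, aux_prod_neg, cpow_neg_one, Nat.factorial_succ (m + 1)]
      have h1 : ((m + 1).factorial : ℂ) ≠ 0 := by exact_mod_cast Nat.factorial_ne_zero _
      have h2 : ((m : ℂ) + 1 + 1) ≠ 0 := by exact_mod_cast (Nat.succ_ne_zero (m + 1))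
      have h3 : ((-1 : ℂ)) ^ (m + 1) * (-1) ^ (m + 1) = 1 := by
        rw [← mul_pow]; simp
      push_cast
      field_simp
      rw [pow_succ (-1 : ℂ) (m + 1)]
      linear_combination (-((n : ℂ)⁻¹ ^ (m + 1 + 1)) * n) * h3 +
        ((n : ℂ)⁻¹ ^ (m + 1) * (-1) ^ (m * 2)) * (mul_inv_cancel₀ hn0)
    · simp [cpow_neg_one]
  · have ha : 1 - s ≠ 0 := sub_ne_zero.mpr (Ne.symm hs)
    have hint := integral_cpow (a := (n : ℝ) - 1) (b := n) (r := -s)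
      (Or.inr ⟨fun h => hs (neg_injective h), hmem⟩)
    have hb := aux_binom (1 - s) (-(n : ℂ)⁻¹) (by rwa [norm_neg])
    rw [← hasSum_nat_add_iff' 2] at hb
    have hb2 := hb.mul_left ((n : ℂ) ^ (-s) * n / (1 - s))
    have e1 : (n : ℂ) ^ (-s + 1) = (n : ℂ) ^ (-s) * n := by
      rw [cpow_add _ _ hn0, cpow_one]
    have e2 : (((n : ℝ) - 1 : ℝ) : ℂ) ^ (-s + 1)
        = (n : ℂ) ^ (-s) * n * (1 + -(n : ℂ)⁻¹) ^ (1 - s) := by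
      have h0 : 0 ≤ 1 - (n : ℝ)⁻¹ := by
        have := inv_le_one_of_one_le₀ (show (1 : ℝ) ≤ n by linarith)
        linarith
      have := mul_cpow_ofReal_nonneg (a := (n : ℝ)) (b := 1 - (n : ℝ)⁻¹) (by linarith) h0 (-s + 1)
      push_cast at this
      rw [e1, mul_sub, mul_inv_cancel₀ hn0, mul_one] at this
      push_cast
      rw [this, show -s + 1 = 1 - s by ring, sub_eq_add_neg 1 ((n : ℂ)⁻¹)]
    rw [hint, e2, ofReal_natCast, e1]
    convert! hb2 using 1
    · funext m
      rw [hpow, aux_choose, neg_pow (n : ℂ)⁻¹]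
      have h1 : ((m + 1 + 1).factorial : ℂ) ≠ 0 := by exact_mod_cast Nat.factorial_ne_zero _
      rw [show m + 2 = m + 1 + 1 from rfl, pow_succ ((n : ℂ)⁻¹) (m + 1)]
      field_simp
    · simp [Finset.sum_range_succ]
      have : -s + 1 ≠ 0 := by rwa [neg_add_eq_sub]
      field_simp
      ring

/-- For any complex s and integer N ≥ 2,
∑_{n=2}^N [n^{-s} - ∫_{n-1}^n x^{-s} dx]
  = ∑_{m=1}^∞ (∏_{j=1}^m (1-s-j)) ((-1)^{m+1}/(m+1)!) ∑_{n=2}^N n^{-s-m},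
the series on the right converging absolutely. (Here the index `m` runs over `ℕ`
shifted by one, so the term below at `m : ℕ` is the term `m+1` of the series.) -/
theorem binomial_expansion_integral_difference (s : ℂ) (N : ℕ) (hN : 2 ≤ N) :
    HasSum
      (fun m : ℕ =>
        (∏ j ∈ Icc 1 (m + 1), (1 - s - (j : ℂ))) *
          ((-1) ^ (m + 1 + 1) / ((m + 1 + 1).factorial : ℂ)) *
          ∑ n ∈ Icc 2 N, (n : ℂ) ^ (-s - (m + 1)))
      (∑ n ∈ Icc 2 N,
        ((n : ℂ) ^ (-s) - ∫ x in ((n : ℝ) - 1)..(n : ℝ), (x : ℂ) ^ (-s))) ∧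
    Summable
      (fun m : ℕ =>
        ‖(∏ j ∈ Icc 1 (m + 1), (1 - s - (j : ℂ))) *
          ((-1) ^ (m + 1 + 1) / ((m + 1 + 1).factorial : ℂ)) *
          ∑ n ∈ Icc 2 N, (n : ℂ) ^ (-s - (m + 1))‖) := by
  have key : HasSum
      (fun m : ℕ =>
        (∏ j ∈ Icc 1 (m + 1), (1 - s - (j : ℂ))) *
          ((-1) ^ (m + 1 + 1) / ((m + 1 + 1).factorial : ℂ)) *
          ∑ n ∈ Icc 2 N, (n : ℂ) ^ (-s - (m + 1)))
      (∑ n ∈ Icc 2 N,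
        ((n : ℂ) ^ (-s) - ∫ x in ((n : ℝ) - 1)..(n : ℝ), (x : ℂ) ^ (-s))) := by
    simp_rw [Finset.mul_sum]
    exact hasSum_sum fun n hn => aux_term s n (Finset.mem_Icc.mp hn).1
  exact ⟨key, key.summable.norm⟩
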